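/- arXiv:2602.19385 — 2 statements merged into one kernel-verified Lean document; each statement's English description precedes it below -/
import Mathlib

section
/- Convergence of biased gradient descent (Theorem 1): Let d ≥ 1 and let L : ℝ^d → ℝ be a nonnegative differentiable function whose gradient is β-Lipschitz for some β > 0, i.e. ‖∇L(w) − ∇L(w')‖ ≤ β‖w − w'‖ for all w, w'. Let (w_t)_{t≥1} be generated by w_{t+1} = w_t − η_t g_t, where g_t ∈ ℝ^d are arbitrary descent vectors and the step sizes satisfy 0 < η_t ≤ 1/β. Define the gradient shifting δ_t² = ‖g_t − ∇L(w_t)‖². Then for every T ≥ 1, min_{1 ≤ t ≤ T} ‖∇L(w_t)‖² ≤ 2 L(w_1) / (∑_{t=1}^T η_t) + (∑_{t=1}^T η_t δ_t²) / (∑_{t=1}^T η_t). -/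
open Finset

/-!
Along a segment the one-sided bound `⟪∇f y - ∇f x, y - x⟫ ≤ β ‖y - x‖²` keeps `f` below its
quadratic model at `x`. For a step of size `η` with `η β ≤ 1`, the quadratic term is at most
`η / 2 * ‖g‖²`, and the polarization identity `‖g‖² - 2⟪∇f, g⟫ = ‖g - ∇f‖² - ‖∇f‖²` turns the model
into `η ‖∇f(x)‖² ≤ 2 (f(x) - f(x - η g)) + η ‖g - ∇f(x)‖²`. Summing telescopes the values of `f`,
and some `‖∇f(w_t)‖²` is at most the `η`-weighted average of all of them.
-/

lemma exists_le_div_sum_of_sum_mul_le {ι 𝕜 : Type*} [Field 𝕜] [LinearOrder 𝕜]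
    [IsStrictOrderedRing 𝕜] {s : Finset ι} {p a : ι → 𝕜} {c : 𝕜}
    (hp : ∀ i ∈ s, 0 ≤ p i) (hsum : 0 < ∑ i ∈ s, p i) (h : ∑ i ∈ s, p i * a i ≤ c) :
    ∃ i ∈ s, a i ≤ c / ∑ i ∈ s, p i := by
  obtain ⟨i, hi, hle⟩ := (concaveOn_id convex_univ).exists_le_of_centerMass hp hsum
    (p := a) fun _ _ ↦ Set.mem_univ _
  refine ⟨i, hi, hle.trans ?_⟩
  rw [id, centerMass, smul_eq_mul, inv_mul_eq_div]
  exact div_le_div_of_nonneg_right h hsum.le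

section Smooth

open scoped Gradient RealInnerProductSpace

variable {E : Type*} [NormedAddCommGroup E] [InnerProductSpace ℝ E]

lemma real_inner_le_mul_norm_sq_of_norm_le {u v : E} {β : ℝ} (h : ‖u‖ ≤ β * ‖v‖) :
    ⟪u, v⟫ ≤ β * ‖v‖ ^ 2 :=
  calc ⟪u, v⟫ ≤ ‖u‖ * ‖v‖ := real_inner_le_norm u v
    _ ≤ β * ‖v‖ * ‖v‖ := by gcongr
    _ = β * ‖v‖ ^ 2 := by ring

variable [CompleteSpace E] {f : E → ℝ} {β : ℝ}

lemma hasDerivAt_comp_add_smul {x v : E} {s : ℝ} (hf : DifferentiableAt ℝ f (x + s • v)) :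
    HasDerivAt (fun s : ℝ ↦ f (x + s • v)) ⟪∇ f (x + s • v), v⟫ s := by
  have hline : HasDerivAt (fun s : ℝ ↦ x + s • v) v s := by
    simpa using ((hasDerivAt_id s).smul_const v).const_add x
  exact hf.hasGradientAt.hasFDerivAt.comp_hasDerivAt s hline

lemma inner_gradient_add_smul_le (hβ : ∀ x y, ⟪∇ f y - ∇ f x, y - x⟫ ≤ β * ‖y - x‖ ^ 2)
    (x v : E) {s : ℝ} (hs : 0 < s) :
    ⟪∇ f (x + s • v), v⟫ ≤ ⟪∇ f x, v⟫ + β * ‖v‖ ^ 2 * s := by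
  have h := hβ x (x + s • v)
  rw [add_sub_cancel_left, real_inner_smul_right, norm_smul, Real.norm_of_nonneg hs.le,
    inner_sub_left] at h
  refine le_of_mul_le_mul_left ?_ hs
  linarith

lemma le_add_inner_gradient_add_norm_sq (hf : Differentiable ℝ f)
    (hβ : ∀ x y, ⟪∇ f y - ∇ f x, y - x⟫ ≤ β * ‖y - x‖ ^ 2) (x v : E) :
    f (x + v) ≤ f x + ⟪∇ f x, v⟫ + β / 2 * ‖v‖ ^ 2 := by
  let gap (s : ℝ) : ℝ := f (x + s • v) - (s * ⟪∇ f x, v⟫ + β / 2 * ‖v‖ ^ 2 * s ^ 2)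
  have hgap (s : ℝ) : HasDerivAt gap
      (⟪∇ f (x + s • v), v⟫ - (⟪∇ f x, v⟫ + β * ‖v‖ ^ 2 * s)) s := by
    have hmodel := ((hasDerivAt_id s).mul_const ⟪∇ f x, v⟫).add
      ((hasDerivAt_pow 2 s).const_mul (β / 2 * ‖v‖ ^ 2))
    exact ((hasDerivAt_comp_add_smul (hf _)).sub hmodel).congr_deriv (by push_cast; ring)
  have hanti : AntitoneOn gap (Set.Ici 0) := by
    refine antitoneOn_of_hasDerivWithinAt_nonpos (convex_Ici 0)
      (fun s _ ↦ (hgap s).continuousAt.continuousWithinAt)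
      (fun s _ ↦ (hgap s).hasDerivWithinAt) fun s hs ↦ ?_
    rw [interior_Ici] at hs
    exact sub_nonpos.mpr (inner_gradient_add_smul_le hβ x v hs)
  have hle : gap 1 ≤ gap 0 := hanti Set.self_mem_Ici (Set.mem_Ici.mpr zero_le_one) zero_le_one
  simp only [gap, one_smul, zero_smul, add_zero] at hle
  linarith

lemma mul_norm_gradient_sq_le_of_step (hf : Differentiable ℝ f)
    (hβ : ∀ x y, ⟪∇ f y - ∇ f x, y - x⟫ ≤ β * ‖y - x‖ ^ 2)
    {η : ℝ} (hη : 0 ≤ η) (hηβ : η * β ≤ 1) (x g : E) :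
    η * ‖∇ f x‖ ^ 2 ≤ 2 * (f x - f (x - η • g)) + η * ‖g - ∇ f x‖ ^ 2 := by
  have hdescent : f (x - η • g) ≤ f x - η * ⟪∇ f x, g⟫ + η * β * (η * ‖g‖ ^ 2) / 2 := by
    have h := le_add_inner_gradient_add_norm_sq hf hβ x (-(η • g))
    rw [← sub_eq_add_neg, inner_neg_right, real_inner_smul_right, norm_neg, norm_smul,
      Real.norm_of_nonneg hη] at h
    linarith
  have hquad : η * β * (η * ‖g‖ ^ 2) ≤ η * ‖g‖ ^ 2 :=
    mul_le_of_le_one_left (by positivity) hηβ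
  have hpolar : ‖g - ∇ f x‖ ^ 2 = ‖g‖ ^ 2 - 2 * ⟪∇ f x, g⟫ + ‖∇ f x‖ ^ 2 := by
    rw [norm_sub_sq_real, real_inner_comm]
  rw [hpolar]
  linarith

lemma sum_mul_norm_gradient_sq_le (hf : Differentiable ℝ f)
    (hβ : ∀ x y, ⟪∇ f y - ∇ f x, y - x⟫ ≤ β * ‖y - x‖ ^ 2)
    {w g : ℕ → E} {η : ℕ → ℝ} {m n : ℕ} (hmn : m ≤ n) (hη : ∀ t ∈ Ico m n, 0 ≤ η t)
    (hηβ : ∀ t ∈ Ico m n, η t * β ≤ 1) (hw : ∀ t ∈ Ico m n, w (t + 1) = w t - η t • g t) :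
    ∑ t ∈ Ico m n, η t * ‖∇ f (w t)‖ ^ 2 ≤
      2 * (f (w m) - f (w n)) + ∑ t ∈ Ico m n, η t * ‖g t - ∇ f (w t)‖ ^ 2 := by
  have htelescope : ∑ t ∈ Ico m n, (f (w t) - f (w (t + 1))) = f (w m) - f (w n) := by
    rw [← neg_sub (f (w n)), ← sum_Ico_sub (fun t ↦ f (w t)) hmn, ← sum_neg_distrib]
    simp only [neg_sub]
  calc ∑ t ∈ Ico m n, η t * ‖∇ f (w t)‖ ^ 2
    _ ≤ ∑ t ∈ Ico m n,
          (2 * (f (w t) - f (w (t + 1))) + η t * ‖g t - ∇ f (w t)‖ ^ 2) := by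
      refine sum_le_sum fun t ht ↦ ?_
      rw [hw t ht]
      exact mul_norm_gradient_sq_le_of_step hf hβ (hη t ht) (hηβ t ht) (w t) (g t)
    _ = 2 * (f (w m) - f (w n)) + ∑ t ∈ Ico m n, η t * ‖g t - ∇ f (w t)‖ ^ 2 := by
      rw [sum_add_distrib, ← mul_sum, htelescope]

theorem biased_gd_convergence_general (hf : Differentiable ℝ f)
    (hβ : ∀ x y, ⟪∇ f y - ∇ f x, y - x⟫ ≤ β * ‖y - x‖ ^ 2)
    {w g : ℕ → E} {η : ℕ → ℝ} {T : ℕ} (hη : ∀ t ∈ Icc 1 T, 0 ≤ η t)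
    (hsum : 0 < ∑ t ∈ Icc 1 T, η t) (hηβ : ∀ t ∈ Icc 1 T, η t * β ≤ 1)
    (hw : ∀ t ∈ Icc 1 T, w (t + 1) = w t - η t • g t) {c : ℝ} (hc : c ≤ f (w (T + 1))) :
    ∃ t ∈ Icc 1 T, ‖∇ f (w t)‖ ^ 2 ≤
      2 * (f (w 1) - c) / (∑ s ∈ Icc 1 T, η s) +
        (∑ s ∈ Icc 1 T, η s * ‖g s - ∇ f (w s)‖ ^ 2) / (∑ s ∈ Icc 1 T, η s) := by
  rw [← add_div]
  refine exists_le_div_sum_of_sum_mul_le hη hsum ?_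
  rw [← Ico_add_one_right_eq_Icc] at hη hηβ hw ⊢
  linarith [sum_mul_norm_gradient_sq_le hf hβ (Nat.le_add_left 1 T) hη hηβ hw]

end Smooth

/-- Convergence of biased gradient descent (Theorem 1). -/
theorem biased_gd_convergence {d : ℕ} (hd : 1 ≤ d)
    (L : EuclideanSpace ℝ (Fin d) → ℝ) (β : ℝ) (hβ : 0 < β)
    (hL0 : ∀ w, 0 ≤ L w) (hLdiff : Differentiable ℝ L)
    (hLsmooth : ∀ w w', ‖gradient L w - gradient L w'‖ ≤ β * ‖w - w'‖)
    (w g : ℕ → EuclideanSpace ℝ (Fin d)) (η : ℕ → ℝ)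
    (hη : ∀ t, 0 < η t) (hηβ : ∀ t, η t ≤ 1 / β)
    (hupd : ∀ t, 1 ≤ t → w (t + 1) = w t - η t • g t)
    (T : ℕ) (hT : 1 ≤ T) :
    ∃ t ∈ Finset.Icc 1 T,
      ‖gradient L (w t)‖ ^ 2 ≤
        2 * L (w 1) / (∑ s ∈ Finset.Icc 1 T, η s) +
          (∑ s ∈ Finset.Icc 1 T, η s * ‖g s - gradient L (w s)‖ ^ 2) /
            (∑ s ∈ Finset.Icc 1 T, η s) := by
  simpa only [sub_zero] using biased_gd_convergence_general hLdiff
    (fun x y ↦ real_inner_le_mul_norm_sq_of_norm_le (hLsmooth y x))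
    (fun t _ ↦ (hη t).le) (sum_pos (fun t _ ↦ hη t) (nonempty_Icc.mpr hT))
    (fun t _ ↦ (le_div_iff₀ hβ).mp (hηβ t)) (fun t ht ↦ hupd t (mem_Icc.mp ht).1)
    (hL0 (w (T + 1)))
end

section
/- Estimation error of the squared gradient shifting: Let d ≥ 1 and G > 0, let a, â, b, c, ĉ ∈ ℝ^d all have ‖·‖_∞ ≤ G, and let n ≥ 0 be real. Define δ̂ = ‖ (1/(n+1)) â + (n/(n+1)) b − ĉ ‖₂ and δ = ‖ (1/(n+1)) a + (n/(n+1)) b − c ‖₂. Then | δ̂² − δ² | ≤ 4 √d G · ( (1/(n+1)) ‖ â − a ‖₂ + ‖ ĉ − c ‖₂ ). -/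
/-!
Let `u` and `v` be the empirical and the true shifting vector. Then
`|‖u‖ ^ 2 - ‖v‖ ^ 2| ≤ (‖u‖ + ‖v‖) * ‖u - v‖`, the gradient `b` cancels in `u - v`, and each of
`u` and `v` is the difference of two vectors in a common ball around `0`, since balls are convex.
Only the radius of this ball, at most `√d * G`, depends on the dimension.
-/

open scoped ENNReal NNReal

lemma piLp_norm_le_card_rpow_mul {ι : Type*} [Fintype ι] {p : ℝ≥0∞} [Fact (1 ≤ p)]
    {β : ι → Type*} [∀ i, SeminormedAddCommGroup (β i)] {r : ℝ} (hr : 0 ≤ r) {x : PiLp p β}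
    (hx : ∀ i, ‖x i‖ ≤ r) : ‖x‖ ≤ (Fintype.card ι : ℝ) ^ (1 / p).toReal * r := by
  calc ‖x‖ ≤ ((Fintype.card ι : ℝ≥0) ^ (1 / p).toReal : ℝ≥0) * ‖WithLp.ofLp x‖ :=
        (PiLp.antilipschitzWith_ofLp p β).le_mul_norm (WithLp.ofLp_zero p) x
    _ ≤ (Fintype.card ι : ℝ) ^ (1 / p).toReal * r := by
        push_cast
        gcongr
        exact (pi_norm_le_iff_of_nonneg hr).2 hx

lemma euclideanSpace_norm_le_sqrt_card_mul {ι 𝕜 : Type*} [Fintype ι] [RCLike 𝕜] {r : ℝ}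
    (hr : 0 ≤ r) {x : EuclideanSpace 𝕜 ι} (hx : ∀ i, ‖x i‖ ≤ r) :
    ‖x‖ ≤ √(Fintype.card ι) * r := by
  simpa [Real.sqrt_eq_rpow] using piLp_norm_le_card_rpow_mul hr hx

lemma abs_norm_sq_sub_norm_sq_le {E : Type*} [SeminormedAddCommGroup E] (u v : E) :
    |‖u‖ ^ 2 - ‖v‖ ^ 2| ≤ (‖u‖ + ‖v‖) * ‖u - v‖ := by
  rw [sq_sub_sq, abs_mul, abs_of_nonneg (by positivity)]
  gcongr
  exact abs_norm_sub_norm_le u v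

section GradientShift

variable {E : Type*} [SeminormedAddCommGroup E] [NormedSpace ℝ E] {s t r : ℝ}

/-- The vector whose norm is the gradient shifting: the gradients `x` and `y` of two datasets are
mixed with weights `s` and `t`, for which the paper takes `1 / (n + 1)` and `n / (n + 1)`, and
compared with the gradient `z`. -/
def gradientShift (s t : ℝ) (x y z : E) : E := s • x + t • y - z

lemma norm_gradientShift_le (hs : 0 ≤ s) (ht : 0 ≤ t) (hst : s + t = 1) {x y z : E}
    (hx : ‖x‖ ≤ r) (hy : ‖y‖ ≤ r) (hz : ‖z‖ ≤ r) : ‖gradientShift s t x y z‖ ≤ 2 * r := by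
  have hxy : ‖s • x + t • y‖ ≤ r := by
    rw [← mem_closedBall_zero_iff] at hx hy ⊢
    exact convex_closedBall 0 r hx hy hs ht hst
  rw [two_mul]
  exact norm_sub_le_of_le hxy hz

lemma norm_gradientShift_sub_gradientShift_le (hs : 0 ≤ s) (x x' y z z' : E) :
    ‖gradientShift s t x' y z' - gradientShift s t x y z‖ ≤ s * ‖x' - x‖ + ‖z' - z‖ := by
  have y_cancels : gradientShift s t x' y z' - gradientShift s t x y z =
      s • (x' - x) - (z' - z) := by
    unfold gradientShift
    module
  rw [y_cancels, ← norm_smul_of_nonneg hs]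
  exact norm_sub_le _ _

theorem sq_gradient_shifting_estimation_error_general (hs : 0 ≤ s) (ht : 0 ≤ t) (hst : s + t = 1)
    {a ahat b c chat : E} (ha : ‖a‖ ≤ r) (hahat : ‖ahat‖ ≤ r) (hb : ‖b‖ ≤ r) (hc : ‖c‖ ≤ r)
    (hchat : ‖chat‖ ≤ r) :
    |‖gradientShift s t ahat b chat‖ ^ 2 - ‖gradientShift s t a b c‖ ^ 2| ≤
      4 * r * (s * ‖ahat - a‖ + ‖chat - c‖) := by
  have hr : 0 ≤ r := (norm_nonneg b).trans hb
  have norm_add_norm_le : ‖gradientShift s t ahat b chat‖ + ‖gradientShift s t a b c‖ ≤ 4 * r := by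
    linarith [norm_gradientShift_le hs ht hst hahat hb hchat,
      norm_gradientShift_le hs ht hst ha hb hc]
  calc |‖gradientShift s t ahat b chat‖ ^ 2 - ‖gradientShift s t a b c‖ ^ 2|
      ≤ (‖gradientShift s t ahat b chat‖ + ‖gradientShift s t a b c‖) *
          ‖gradientShift s t ahat b chat - gradientShift s t a b c‖ :=
        abs_norm_sq_sub_norm_sq_le _ _
    _ ≤ 4 * r * (s * ‖ahat - a‖ + ‖chat - c‖) := by
        gcongr
        exact norm_gradientShift_sub_gradientShift_le hs a ahat b c chat

end GradientShift

/-- Estimation error of the squared gradient shifting. -/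
theorem sq_gradient_shifting_estimation_error {d : ℕ} (hd : 1 ≤ d)
    (G : ℝ) (hG : 0 < G) (a ahat b c chat : EuclideanSpace ℝ (Fin d))
    (ha : ∀ j, |a j| ≤ G) (hahat : ∀ j, |ahat j| ≤ G) (hb : ∀ j, |b j| ≤ G)
    (hc : ∀ j, |c j| ≤ G) (hchat : ∀ j, |chat j| ≤ G)
    (n : ℝ) (hn : 0 ≤ n) :
    |‖(1 / (n + 1)) • ahat + (n / (n + 1)) • b - chat‖ ^ 2 -
        ‖(1 / (n + 1)) • a + (n / (n + 1)) • b - c‖ ^ 2| ≤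
      4 * Real.sqrt d * G * ((1 / (n + 1)) * ‖ahat - a‖ + ‖chat - c‖) := by
  have norm_le (x : EuclideanSpace ℝ (Fin d)) (hx : ∀ j, ‖x j‖ ≤ G) : ‖x‖ ≤ √d * G := by
    simpa only [Fintype.card_fin] using euclideanSpace_norm_le_sqrt_card_mul hG.le hx
  have weights_sum : 1 / (n + 1) + n / (n + 1) = 1 := by field_simp; ring
  rw [mul_assoc 4]
  exact sq_gradient_shifting_estimation_error_general (by positivity) (by positivity) weights_sum
    (norm_le a ha) (norm_le ahat hahat) (norm_le b hb) (norm_le c hc) (norm_le chat hchat)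
end
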